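/- Let d, w_1,…,w_n be positive integers such that w_i divides d for all i = 1,…,n, and let f:(ℂ^n,0)→(ℂ,0) be a weighted homogeneous polynomial of degree d with respect to w = (w_1,…,w_n) with an isolated singularity at the origin. Then there exists an analytic change of coordinates 𝐱 in (ℂ^n,0) of the form x_i = y_i + h_i(y_1,…,y_n), with each h_i a polynomial, such that: (1) f∘𝐱 is convenient; and (2) whenever h_i ≠ 0, the polynomial h_i is weighted homogeneous of degree w_i with respect to w, so that f∘𝐱 is again weighted homogeneous of degree d with respect to w. -/

import Mathlib

open Filter Topology

/-- `g` has a singular point at the origin which is isolated: the gradient of `g` vanishes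
at `0` and at no nearby point `≠ 0`. -/
def IsolatedSing {E : Type*} [NormedAddCommGroup E] [NormedSpace ℂ E] (g : E → ℂ) : Prop :=
  fderiv ℂ g 0 = 0 ∧ ∀ᶠ x in 𝓝[≠] (0 : E), fderiv ℂ g x ≠ 0

/-! As the singularity is isolated, the gradient of `f` is nonzero at some `t e_i` with `t ≠ 0`. So
some `∂f/∂x_j` contains a pure power of `x_i`, and weighted homogeneity forces `w_i ∣ w_j`; write
`j = τ(i)`. The weighted homogeneous vector field with components
`g_j = ∑_{τ(i) = j} x_i ^ (w_j / w_i)` points in the direction `e_{τ(i)}` along the `i`-th axis, so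
`s ↦ f (t e_i + s g(t e_i))` has nonzero derivative at `s = 0`. Hence for all but finitely many `s`
the polynomial `f ∘ (id + s g)` is nonzero on every axis and the linear part of `id + s g` is
invertible. A weight-preserving substitution with invertible linear part is an automorphism of the
polynomial ring, by induction on the weight of the variables. -/

section CoordChange

open MvPolynomial

section ConvenientPolynomials

variable {R σ : Type*} [CommSemiring R]

/-- A polynomial is convenient if a pure power of each variable occurs in its support, i.e. its
Newton polyhedron meets every coordinate axis. The power `0` is not excluded: the notion is meant
for polynomials without constant term. -/
def IsConvenient (P : MvPolynomial σ R) : Prop :=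
  ∀ i, ∃ m : ℕ, Finsupp.single i m ∈ P.support

theorem exists_single_mem_support_of_eval_single_ne_zero [DecidableEq σ] {P : MvPolynomial σ R}
    {i : σ} {t : R} (h : eval (Pi.single i t) P ≠ 0) :
    ∃ m : ℕ, Finsupp.single i m ∈ P.support := by
  rw [eval_eq] at h
  obtain ⟨k, hk, hne⟩ := Finset.exists_ne_zero_of_sum_ne_zero h
  have hsupp : k.support ⊆ {i} := fun j hj => by
    by_contra hji
    refine hne (mul_eq_zero_of_right _ (Finset.prod_eq_zero hj ?_))
    rw [Pi.single_eq_of_ne (by simpa using hji), zero_pow (Finsupp.mem_support_iff.mp hj)]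
  exact ⟨k i, Finsupp.support_subset_singleton.mp hsupp ▸ hk⟩

end ConvenientPolynomials

section WeightedHomogeneous

variable {R σ : Type*} [CommSemiring R]

theorem isWeightedHomogeneous_bind₁ {M τ : Type*} [AddCommMonoid M] {v : σ → M} {w : τ → M}
    {d : M} {f : MvPolynomial σ R} {g : σ → MvPolynomial τ R}
    (hf : IsWeightedHomogeneous v f d) (hg : ∀ i, IsWeightedHomogeneous w (g i) (v i)) :
    IsWeightedHomogeneous w (bind₁ g f) d := by
  rw [f.as_sum, map_sum]
  refine IsWeightedHomogeneous.sum _ _ _ fun k hk => ?_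
  rw [bind₁_monomial, ← hf (mem_support_iff.mp hk), Finsupp.weight_apply]
  exact (IsWeightedHomogeneous.prod _ _ _ fun i _ => (hg i).pow (k i)).C_mul _

theorem weight_dvd_of_eval_single_pderiv_ne_zero [DecidableEq σ] {w : σ → ℕ} {d : ℕ}
    {f : MvPolynomial σ R} (hf : IsWeightedHomogeneous w f d) {i j : σ} (hd : w i ∣ d) {t : R}
    (h : eval (Pi.single i t) (pderiv j f) ≠ 0) : w i ∣ w j := by
  obtain ⟨m, hm⟩ := exists_single_mem_support_of_eval_single_ne_zero h
  rw [mem_support_iff, coeff_pderiv] at hm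
  have hweight : m * w i + w j = d := by
    simpa [Finsupp.weight_single] using hf (left_ne_zero_of_mul hm)
  exact (Nat.dvd_add_right (Dvd.intro_left m rfl)).mp (hweight ▸ hd)

theorem lt_weight_of_mem_support {w : σ → ℕ} (hw : ∀ i, w i ≠ 0) {k : σ →₀ ℕ} {i : σ}
    (hi : i ∈ k.support) (hk : k ≠ Finsupp.single i 1) : w i < Finsupp.weight w k := by
  classical
  have := Finsupp.nonTorsionWeight_of ℕ w hw
  have hrest : k - Finsupp.single i 1 ≠ 0 := fun h => hk <| by
    rw [← Finsupp.sub_add_single_one_cancel (Finsupp.mem_support_iff.mp hi), h, zero_add]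
  rw [← Finsupp.weight_sub_single_add (w := w) (Finsupp.mem_support_iff.mp hi)]
  exact Nat.lt_add_of_pos_left
    (Nat.pos_of_ne_zero ((Finsupp.weight_eq_zero_iff_eq_zero w).not.mpr hrest))

end WeightedHomogeneous

theorem injective_of_surjective_ringEnd {A : Type*} [CommRing A] [IsNoetherianRing A]
    {f : A →+* A} (hf : Function.Surjective f) : Function.Injective f := by
  have hker_mono : Monotone fun n : ℕ => RingHom.ker (f ^ n) :=
    monotone_nat_of_le_succ fun n x hx => by simp_all [RingHom.mem_ker, pow_succ']
  obtain ⟨n, hn⟩ := monotone_stabilizes_iff_noetherian.mpr ‹_› ⟨_, hker_mono⟩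
  rw [injective_iff_map_eq_zero]
  intro x hx
  obtain ⟨y, rfl⟩ : ∃ y, (f ^ n) y = x := by
    rw [RingHom.coe_pow]
    exact hf.iterate n x
  have hy : y ∈ RingHom.ker (f ^ (n + 1)) := by
    rwa [RingHom.mem_ker, pow_succ']
  exact (hn (n + 1) n.le_succ).ge hy

theorem mem_of_isUnit_of_forall_sum_smul_mem {R M n : Type*} [Semiring R] [AddCommMonoid M]
    [Module R M] [Fintype n] [DecidableEq n] {J : Matrix n n R} (hJ : IsUnit J)
    {N : Submodule R M} {y : n → M} (h : ∀ k, ∑ l, J k l • y l ∈ N) (j : n) : y j ∈ N := by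
  obtain ⟨J', hJ'⟩ := hJ.exists_left_inv
  have hy : y j = ∑ k, J' j k • ∑ l, J k l • y l := by
    simp_rw [Finset.smul_sum, smul_smul]
    rw [Finset.sum_comm]
    simp_rw [← Finset.sum_smul, ← Matrix.mul_apply, hJ', Matrix.one_apply, ite_smul, one_smul,
      zero_smul, Finset.sum_ite_eq, Finset.mem_univ, if_true]
  exact hy ▸ N.sum_mem fun k _ => N.smul_mem _ (h k)

section LinearPart

variable {R σ : Type*}

/-- The matrix of the linear part at the origin of the substitution `X j ↦ φ j`: its `(j, k)` entry
is the coefficient of `X k` in `φ j`. -/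
noncomputable def linearPart [CommSemiring R] (φ : σ → MvPolynomial σ R) : Matrix σ σ R :=
  .of fun j k => coeff (Finsupp.single k 1) (φ j)

theorem linearPart_X_add_C_mul [CommSemiring R] [DecidableEq σ] (g : σ → MvPolynomial σ R) (s : R) :
    linearPart (fun j => X j + C s * g j) = 1 + s • linearPart g := by
  ext j k
  simp [linearPart, coeff_X, Matrix.one_apply, Finsupp.single_left_inj, eq_comm]

theorem linearPart_apply_eq_zero [CommSemiring R] {w : σ → ℕ} {φ : σ → MvPolynomial σ R}
    (hφ : ∀ j, IsWeightedHomogeneous w (φ j) (w j)) {j k : σ} (h : w k ≠ w j) :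
    linearPart φ j k = 0 :=
  (hφ j).coeff_eq_zero _ (by simpa [Finsupp.weight_single] using h)

variable [CommRing R] [Fintype σ]

theorem sub_linear_mem_of_isWeightedHomogeneous {w : σ → ℕ} (hw : ∀ i, w i ≠ 0) {d : ℕ}
    {P : MvPolynomial σ R} (hP : IsWeightedHomogeneous w P d) {S : Subalgebra R (MvPolynomial σ R)}
    (hS : ∀ i, w i < d → X i ∈ S) :
    P - ∑ k, coeff (Finsupp.single k 1) P • X k ∈ S := by
  classical
  set Q := P - ∑ k, coeff (Finsupp.single k 1) P • X k with hQ
  have hcoeff (m : σ →₀ ℕ) : coeff m Q =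
      coeff m P - ∑ k, if Finsupp.single k 1 = m then coeff m P else 0 := by
    simp only [hQ, coeff_sub, coeff_sum, coeff_smul]
    congr! 2 with k
    split_ifs with hk <;> simp [coeff_X, hk]
  rw [Q.as_sum]
  refine S.sum_mem fun m hm => ?_
  rw [mem_support_iff, hcoeff] at hm
  have hnonlinear (k : σ) : m ≠ Finsupp.single k 1 := by
    rintro rfl
    simp [Finsupp.single_left_inj] at hm
  have hweight : Finsupp.weight w m = d :=
    hP fun h => hm (by simp [h])
  rw [monomial_eq, ← algebraMap_eq]
  exact S.mul_mem (S.algebraMap_mem _) <| S.prod_mem fun i hi => S.pow_mem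
    (hS i (hweight ▸ lt_weight_of_mem_support hw hi (hnonlinear i))) _

theorem X_mem_of_isUnit_linearPart [DecidableEq σ] {w : σ → ℕ} (hw : ∀ i, w i ≠ 0)
    {φ : σ → MvPolynomial σ R} (hφ : ∀ j, IsWeightedHomogeneous w (φ j) (w j))
    (hJ : IsUnit (linearPart φ)) {S : Subalgebra R (MvPolynomial σ R)} (hS : ∀ j, φ j ∈ S) (j : σ) :
    X j ∈ S := by
  induction hc : w j using Nat.strong_induction_on generalizing j with
  | _ c ih =>
  -- The linear part is block diagonal for the weights, so the block of weight `c` can be inverted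
  -- on its own by killing the other variables.
  let Y : σ → MvPolynomial σ R := fun k => if w k = c then X k else 0
  have hblock (k l : σ) :
      linearPart φ k l • Y l = if w k = c then linearPart φ k l • X l else 0 := by
    by_cases hkl : w l = w k
    · simp [Y, hkl]
    · simp [linearPart_apply_eq_zero hφ hkl]
  have hJY (k : σ) : ∑ l, linearPart φ k l • Y l ∈ Subalgebra.toSubmodule S := by
    by_cases hk : w k = c
    · have hlower := sub_linear_mem_of_isWeightedHomogeneous hw (hφ k)
        fun i hi => ih (w i) (hk ▸ hi) i rfl
      simp only [hblock, hk, if_true]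
      simpa [linearPart] using S.sub_mem (hS k) hlower
    · simp [hblock, hk]
  simpa [Y, hc] using mem_of_isUnit_of_forall_sum_smul_mem hJ hJY j

theorem bind₁_surjective_of_isUnit_linearPart [DecidableEq σ] {w : σ → ℕ} (hw : ∀ i, w i ≠ 0)
    {φ : σ → MvPolynomial σ R} (hφ : ∀ j, IsWeightedHomogeneous w (φ j) (w j))
    (hJ : IsUnit (linearPart φ)) : Function.Surjective (bind₁ φ) := by
  rw [← AlgHom.range_eq_top, eq_top_iff, ← adjoin_range_X, Algebra.adjoin_le_iff]
  rintro _ ⟨j, rfl⟩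
  exact X_mem_of_isUnit_linearPart hw hφ hJ
    (fun k => (bind₁ φ).mem_range.mpr ⟨X k, bind₁_X_right φ k⟩) j

theorem bind₁_bijective_of_isUnit_linearPart [IsNoetherianRing R] [DecidableEq σ] {w : σ → ℕ}
    (hw : ∀ i, w i ≠ 0) {φ : σ → MvPolynomial σ R}
    (hφ : ∀ j, IsWeightedHomogeneous w (φ j) (w j)) (hJ : IsUnit (linearPart φ)) :
    Function.Bijective (bind₁ φ) := by
  have hsurj := bind₁_surjective_of_isUnit_linearPart hw hφ hJ
  exact ⟨injective_of_surjective_ringEnd (f := (bind₁ φ).toRingHom) hsurj, hsurj⟩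

end LinearPart

theorem eval_bind₁ {R σ τ : Type*} [CommSemiring R] (φ : σ → MvPolynomial τ R) (y : τ → R)
    (f : MvPolynomial σ R) : eval y (bind₁ φ f) = eval (fun i => eval y (φ i)) f :=
  eval₂Hom_bind₁ (RingHom.id R) y φ f

theorem eval_injective_of_bind₁_surjective {R σ τ : Type*} [CommSemiring R]
    {φ : σ → MvPolynomial τ R} (h : Function.Surjective (bind₁ φ)) :
    Function.Injective fun (y : τ → R) i => eval y (φ i) := by
  intro x y hxy
  funext i
  obtain ⟨q, hq⟩ := h (X i)
  have heval (z : τ → R) : eval (fun i => eval z (φ i)) q = z i := by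
    rw [← eval_bind₁, hq, eval_X]
  rw [← heval x, ← heval y]
  exact congrArg (eval · q) hxy

section LineRestriction

variable {R σ : Type*} [CommSemiring R]

/-- The restriction of polynomials to the parametrized line `s ↦ a + s • v`. -/
noncomputable def lineRestriction (a v : σ → R) : MvPolynomial σ R →ₐ[R] Polynomial R :=
  aeval fun i => Polynomial.C (a i) + Polynomial.X * Polynomial.C (v i)

theorem eval_lineRestriction (a v : σ → R) (s : R) (f : MvPolynomial σ R) :
    (lineRestriction a v f).eval s = eval (a + s • v) f := by
  induction f using MvPolynomial.induction_on with
  | C r => simp [lineRestriction]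
  | add p q hp hq => simp [hp, hq]
  | mul_X p i hp =>
    rw [map_mul, Polynomial.eval_mul, hp, map_mul]
    simp [lineRestriction, mul_comm s]

theorem eval_zero_derivative_lineRestriction [Fintype σ] (a v : σ → R) (f : MvPolynomial σ R) :
    (lineRestriction a v f).derivative.eval 0 = ∑ j, eval a (pderiv j f) * v j := by
  classical
  induction f using MvPolynomial.induction_on with
  | C r => simp [lineRestriction]
  | add p q hp hq => simp [hp, hq, add_mul, Finset.sum_add_distrib]
  | mul_X p i hp =>
    have hX : (lineRestriction a v (X i)).derivative = Polynomial.C (v i) := by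
      simp [lineRestriction]
    simp only [map_mul, Polynomial.derivative_mul, Polynomial.eval_add, Polynomial.eval_mul, hp, hX,
      eval_lineRestriction, Polynomial.eval_C, zero_smul, add_zero, eval_X, pderiv_mul, map_add,
      pderiv_X, add_mul, Finset.sum_add_distrib, Finset.sum_mul]
    congr 1
    · exact Finset.sum_congr rfl fun j _ => by ring
    · rw [Finset.sum_eq_single i] <;> simp +contextual [eq_comm]

end LineRestriction

section GenericParameter

theorem eventually_eval_ne_zero {R : Type*} [CommRing R] [IsDomain R] {p : Polynomial R}
    (hp : p ≠ 0) : ∀ᶠ s in cofinite, p.eval s ≠ 0 := by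
  simpa [eventually_cofinite, Polynomial.IsRoot] using Polynomial.finite_setOfPred_isRoot hp

theorem eventually_eval_add_smul_ne_zero {R σ : Type*} [CommRing R] [IsDomain R] [Fintype σ]
    {f : MvPolynomial σ R} {a v : σ → R} (h : ∑ j, eval a (pderiv j f) * v j ≠ 0) :
    ∀ᶠ s : R in cofinite, eval (a + s • v) f ≠ 0 := by
  have hline : lineRestriction a v f ≠ 0 := fun hzero => h <| by
    rw [← eval_zero_derivative_lineRestriction, hzero, Polynomial.derivative_zero,
      Polynomial.eval_zero]
  simpa only [eval_lineRestriction] using eventually_eval_ne_zero hline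

theorem eventually_isUnit_one_add_smul {K n : Type*} [Field K] [Fintype n] [DecidableEq n]
    (A : Matrix n n K) : ∀ᶠ s : K in cofinite, IsUnit (1 + s • A) := by
  let p : Polynomial K := (1 + (Polynomial.X : Polynomial K) • A.map Polynomial.C).det
  have heval (s : K) : p.eval s = (1 + s • A).det := by
    rw [← Polynomial.coe_evalRingHom, RingHom.map_det]
    congr 1
    ext i j
    simp [Matrix.one_apply, apply_ite, mul_comm s]
  have hp : p ≠ 0 := fun hzero => by simpa [hzero] using heval 0
  filter_upwards [eventually_eval_ne_zero hp] with s hs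
  rw [Matrix.isUnit_iff_isUnit_det, ← heval]
  exact hs.isUnit

end GenericParameter

section AxisVectorField

variable {R σ : Type*} [CommSemiring R] [Fintype σ] [DecidableEq σ]

/-- The polynomial vector field with a component `X i ^ (w (τ i) / w i)` in the direction `τ i` for
each variable `i`. On the `i`-th coordinate axis it points in the direction `τ i`. The division is
exact where it is used. -/
noncomputable def axisVectorField (w : σ → ℕ) (τ : σ → σ) (j : σ) : MvPolynomial σ R :=
  ∑ i with τ i = j, X i ^ (w (τ i) / w i)

variable {w : σ → ℕ} {τ : σ → σ}

theorem isWeightedHomogeneous_axisVectorField (hτ : ∀ i, w i ∣ w (τ i)) (j : σ) :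
    IsWeightedHomogeneous w (axisVectorField (R := R) w τ j) (w j) := by
  refine IsWeightedHomogeneous.sum _ _ _ fun i hi => ?_
  obtain rfl : τ i = j := by simpa using hi
  simpa [Nat.div_mul_cancel (hτ i)] using
    (isWeightedHomogeneous_X R w i).pow (w (τ i) / w i)

theorem eval_single_axisVectorField (hτ : ∀ i, w (τ i) / w i ≠ 0) (i : σ) (t : R) :
    (fun j => eval (Pi.single i t) (axisVectorField w τ j)) =
      Pi.single (τ i) (t ^ (w (τ i) / w i)) := by
  funext j
  have hother (l : σ) (hl : l ≠ i) :
      (Pi.single i t : σ → R) l ^ (w (τ l) / w l) = 0 := by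
    rw [Pi.single_eq_of_ne hl, zero_pow (hτ l)]
  simp only [axisVectorField, map_sum, map_pow, eval_X]
  rw [Finset.sum_filter, Finset.sum_eq_single i]
  · simp [Pi.single_apply, eq_comm]
  · intro l _ hl
    simp [hother l hl]
  · simp

end AxisVectorField

theorem exists_coordChange_convenient_general {K σ : Type*} [Field K] [Infinite K] [Finite σ]
    [DecidableEq σ] {w : σ → ℕ} (hw : ∀ i, w i ≠ 0) {d : ℕ} (hdvd : ∀ i, w i ∣ d)
    {f : MvPolynomial σ K} (hf : IsWeightedHomogeneous w f d)
    (hgrad : ∀ i, ∃ t ≠ 0, ∃ j, eval (Pi.single i t) (pderiv j f) ≠ 0) :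
    ∃ h : σ → MvPolynomial σ K,
      Function.Bijective (bind₁ fun i => X i + h i) ∧
      IsConvenient (bind₁ (fun i => X i + h i) f) ∧
      (∀ i, IsWeightedHomogeneous w (h i) (w i)) ∧
      IsWeightedHomogeneous w (bind₁ (fun i => X i + h i) f) d := by
  cases nonempty_fintype σ
  choose t ht τ hτ using hgrad
  have hdvdτ (i : σ) : w i ∣ w (τ i) :=
    weight_dvd_of_eval_single_pderiv_ne_zero hf (hdvd i) (hτ i)
  have hexp (i : σ) : w (τ i) / w i ≠ 0 :=
    (Nat.div_pos (Nat.le_of_dvd (Nat.pos_of_ne_zero (hw _)) (hdvdτ i))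
      (Nat.pos_of_ne_zero (hw i))).ne'
  let g : σ → MvPolynomial σ K := axisVectorField w τ
  have hgrad_g (i : σ) : ∑ j, eval (Pi.single i (t i)) (pderiv j f) *
      eval (Pi.single i (t i)) (g j) ≠ 0 := by
    simp [g, congrFun (eval_single_axisVectorField hexp i (t i)), Pi.single_apply, hτ, ht]
  obtain ⟨s, hJ, hs⟩ := ((eventually_isUnit_one_add_smul (linearPart g)).and
    (eventually_all.mpr fun i => eventually_eval_add_smul_ne_zero (hgrad_g i))).exists
  have hh (i : σ) : IsWeightedHomogeneous w (C s * g i) (w i) :=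
    (isWeightedHomogeneous_axisVectorField hdvdτ i).C_mul s
  have hφ (i : σ) : IsWeightedHomogeneous w (X i + C s * g i) (w i) :=
    (isWeightedHomogeneous_X K w i).add (hh i)
  refine ⟨fun i => C s * g i, ?_, fun i => ?_, hh, isWeightedHomogeneous_bind₁ hf hφ⟩
  · exact bind₁_bijective_of_isUnit_linearPart hw hφ (linearPart_X_add_C_mul g s ▸ hJ)
  · refine exists_single_mem_support_of_eval_single_ne_zero (t := t i) ?_
    rw [eval_bind₁]
    simp only [map_add, map_mul, eval_X, eval_C]
    exact hs i

theorem fderiv_eval_apply {𝕜 σ : Type*} [NontriviallyNormedField 𝕜] [CompleteSpace 𝕜] [Fintype σ]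
    (f : MvPolynomial σ 𝕜) (a v : σ → 𝕜) :
    fderiv 𝕜 (fun x => eval x f) a v = ∑ j, eval a (pderiv j f) * v j := by
  have hdiff : DifferentiableAt 𝕜 (fun x => eval x f) a :=
    (AnalyticOnNhd.eval_mvPolynomial f a trivial).differentiableAt
  rw [← hdiff.lineDeriv_eq_fderiv, lineDeriv, ← eval_zero_derivative_lineRestriction]
  simp_rw [← eval_lineRestriction]
  exact Polynomial.deriv _

theorem exists_eval_pderiv_ne_zero_of_isolatedSing {σ : Type*} [Fintype σ] [DecidableEq σ]
    {f : MvPolynomial σ ℂ} (hf : IsolatedSing fun x : σ → ℂ => eval x f) (i : σ) :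
    ∃ t ≠ 0, ∃ j, eval (Pi.single i t) (pderiv j f) ≠ 0 := by
  have haxis : Tendsto (fun t : ℂ => (Pi.single i t : σ → ℂ)) (𝓝[≠] 0) (𝓝[≠] 0) := by
    refine tendsto_nhdsWithin_iff.mpr ⟨?_, ?_⟩
    · exact ((continuous_single i).tendsto' 0 0 (Pi.single_zero i)).mono_left nhdsWithin_le_nhds
    · filter_upwards [self_mem_nhdsWithin] with t ht using by simpa using ht
  obtain ⟨t, hgrad, ht⟩ := ((haxis.eventually hf.2).and self_mem_nhdsWithin).exists
  refine ⟨t, ht, ?_⟩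
  by_contra! hzero
  refine hgrad (ContinuousLinearMap.ext fun v => ?_)
  simp [fderiv_eval_apply, hzero]

end CoordChange

/-- Proposition `wMatchEntero`: let `d, w_1,…,w_n` be positive integers
with `w_i ∣ d` for all `i`, and let `f` be a weighted homogeneous polynomial of degree `d`
with respect to `w` with an isolated singularity at the origin. Then there is an analytic
(polynomial) change of coordinates `𝐱`, of the form `x_i = y_i + h_i(y)` with each `h_i` a
polynomial, such that (1) `f ∘ 𝐱` is convenient (a pure power of each variable occurs in
its support), and (2) each nonzero `h_i` is weighted homogeneous of degree `w_i` with
respect to `w`, so that `f ∘ 𝐱` is again weighted homogeneous of degree `d`. -/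
theorem exists_coordChange_convenient
    (n : ℕ) (d : ℕ) (hd : 0 < d) (w : Fin n → ℕ) (hw : ∀ i, 1 ≤ w i)
    (hdvd : ∀ i, w i ∣ d)
    (f : MvPolynomial (Fin n) ℂ)
    (hwh : MvPolynomial.IsWeightedHomogeneous w f d)
    (hf0 : MvPolynomial.coeff 0 f = 0)
    (hiso : IsolatedSing fun x : Fin n → ℂ => MvPolynomial.eval x f) :
    ∃ h : Fin n → MvPolynomial (Fin n) ℂ,
      -- `𝐱 : y ↦ (y_i + h_i(y))_i` is a local (bi)analytic change of coordinates at `0`: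
      (∃ U ∈ 𝓝 (0 : Fin n → ℂ),
        Set.InjOn (fun y i => MvPolynomial.eval y (MvPolynomial.X i + h i)) U) ∧
      -- (1) `f ∘ 𝐱` is convenient:
      (∀ i : Fin n, ∃ m : ℕ,
        Finsupp.single i m ∈
          (MvPolynomial.bind₁ (fun i => MvPolynomial.X i + h i) f).support) ∧
      -- (2) each nonzero `h_i` is weighted homogeneous of degree `w_i` …
      (∀ i, h i ≠ 0 → MvPolynomial.IsWeightedHomogeneous w (h i) (w i)) ∧
      -- … and therefore `f ∘ 𝐱` is weighted homogeneous of degree `d` with respect to `w`: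
      MvPolynomial.IsWeightedHomogeneous w
        (MvPolynomial.bind₁ (fun i => MvPolynomial.X i + h i) f) d := by
  obtain ⟨h, hbij, hconv, hh, hf⟩ := exists_coordChange_convenient_general
    (fun i => Nat.one_le_iff_ne_zero.mp (hw i)) hdvd hwh
    (exists_eval_pderiv_ne_zero_of_isolatedSing hiso)
  exact ⟨h, ⟨Set.univ, univ_mem, (eval_injective_of_bind₁_surjective hbij.2).injOn⟩, hconv,
    fun i _ => hh i, hf⟩
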